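/- arXiv:1801.00419 — 2 statements merged into one kernel-verified Lean document; each statement's English description precedes it below -/
import Mathlib

section
/- Let Y be a topological space, τ_0 a T₀-topology on 𝒪(Y), and for each i = 1, …, n−1 let τ_i be a T₀-topology on 𝒪^i(ℱ_i), where the families are chosen so that ℱ_{i+1} = τ_i for every i = 0, 1, …, n−1 (so ℱ₁ = τ_0). Then for any topology τ_n on 𝒪^n(ℱ_n), the spaces C_{t_{ℱ_n}(τ_n)}(Y, 𝐒) and (𝒪^n(ℱ_n), τ_n) are homeomorphic. -/
open TopologicalSpace Set Topology

universe u v w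

/-- Iterated stage types: `Stage Y 0 = 𝒪(Y)` and `Stage Y (k+1)` is the type in which the
level-`(k+1)` objects `O^{k+1}(U)` live. -/
@[reducible] def Stage (Y : Type u) [TopologicalSpace Y] : ℕ → Type u
  | 0 => Opens Y
  | k + 1 => Set (Set (Stage Y k))

/-- `famO F k U` is `O^{k+1}(U)`, where the family `ℱ_{k+1}` is `F k`.
So `famO F 0 U = O¹(U) = {φ ∈ ℱ₁ : U ∈ φ}` and
`famO F (k+1) U = O^{k+2}(U) = {φ ∈ ℱ_{k+2} : O^{k+1}(U) ∈ φ}`. -/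
def famO {Y : Type u} [TopologicalSpace Y] (F : ∀ k, Set (Set (Stage Y k))) :
    ∀ k, Opens Y → Stage Y (k + 1)
  | 0, U => {φ ∈ F 0 | U ∈ φ}
  | k + 1, U => {φ ∈ F (k + 1) | famO F k U ∈ φ}

variable {Y : Type u} [TopologicalSpace Y]

/-- The set `𝒪^{m+1}(ℱ_{m+1}) = {O^{m+1}(U) : U ∈ 𝒪(Y)}`, as a type. -/
abbrev OmegaN (F : ∀ k, Set (Set (Stage Y k))) (m : ℕ) : Type u :=
  {s : Stage Y (m + 1) // s ∈ Set.range (famO F m)}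

/-- The map `Φ_{ℱ_{m+1}} : 𝒪(Y) → 𝒪^{m+1}(ℱ_{m+1})`, `U ↦ O^{m+1}(U)`. -/
def onMap (F : ∀ k, Set (Set (Stage Y k))) (m : ℕ) (U : Opens Y) : OmegaN F m :=
  ⟨famO F m U, Set.mem_range_self U⟩

/-- The `ℱ_{m+1}(τ)`-family-open topology `t_{ℱ_{m+1}}(τ)` on `C(Y, Z)`: it is generated by the
subbasic sets `⟨ℍ, U⟩ = {f ∈ C(Y,Z) : O^{m+1}(f⁻¹(U)) ∈ ℍ}`, `ℍ ∈ τ`, `U ∈ 𝒪(Z)`. -/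
def famTop (Z : Type v) [TopologicalSpace Z] {Y : Type u} [TopologicalSpace Y]
    (F : ∀ k, Set (Set (Stage Y k))) (m : ℕ)
    (τ : TopologicalSpace (OmegaN F m)) : TopologicalSpace C(Y, Z) :=
  TopologicalSpace.generateFrom
    {S | ∃ (H : Set (OmegaN F m)) (U : Opens Z), IsOpen[τ] H ∧
      S = {f : C(Y, Z) | onMap F m (Opens.comap f U) ∈ H}}

/-!
A continuous map `f : Y → 𝐒` amounts to the open set `f⁻¹({1})`, so `f ↦ Oⁿ(f⁻¹({1}))` maps
`C(Y, 𝐒)` onto `𝒪ⁿ(ℱₙ)`. The remaining open sets `∅` and `𝐒` of `𝐒` have the same preimages under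
every `f` and contribute only trivial subbasic sets, so the family-open topology is exactly the one
induced by this surjection, which is therefore a homeomorphism as soon as `Oⁿ` is injective.
Each stage of the recursion sends a point to the members of a family that contain it, and this is
injective when the family is the collection of open sets of a `T₀` topology.
-/

section MembersAt

variable {α β : Type*}

/-- The members of the family `𝒜` that contain `x`. The family `𝒜` separates points
exactly when this map is injective, and each recursion step of `famO` is a map of this form. -/
def membersAt (𝒜 : Set (Set α)) (x : α) : Set (Set α) :=
  {A ∈ 𝒜 | x ∈ A}

theorem membersAt_eq_membersAt_iff {𝒜 : Set (Set α)} {x y : α} :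
    membersAt 𝒜 x = membersAt 𝒜 y ↔ ∀ A ∈ 𝒜, x ∈ A ↔ y ∈ A := by
  simp only [membersAt, Set.ext_iff, mem_ofPred_eq, and_congr_right_iff]

theorem t0Space_iff_injective_membersAt [TopologicalSpace α] :
    T0Space α ↔ Function.Injective (membersAt {s : Set α | IsOpen s}) := by
  simp only [t0Space_iff_inseparable, Function.Injective, membersAt_eq_membersAt_iff,
    mem_ofPred_eq, inseparable_iff_forall_isOpen]

theorem membersAt_image_image {g : α → β} (hg : Function.Injective g) (𝒜 : Set (Set α)) (x : α) :
    membersAt (image g '' 𝒜) (g x) = image g '' membersAt 𝒜 x := by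
  ext B
  constructor
  · rintro ⟨⟨A, hA, rfl⟩, hx⟩
    exact ⟨A, ⟨hA, hg.mem_set_image.1 hx⟩, rfl⟩
  · rintro ⟨A, ⟨hA, hx⟩, rfl⟩
    exact ⟨mem_image_of_mem _ hA, mem_image_of_mem g hx⟩

theorem membersAt_image_image_injective {g : α → β} (hg : Function.Injective g)
    {𝒜 : Set (Set α)} (h𝒜 : Function.Injective (membersAt 𝒜)) :
    Function.Injective fun x ↦ membersAt (image g '' 𝒜) (g x) := by
  simp only [membersAt_image_image hg]
  exact hg.image_injective.image_injective.comp h𝒜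

end MembersAt

section FamO

variable {F : ∀ k, Set (Set (Stage Y k))}

theorem onMap_injective {m : ℕ} (h : Function.Injective (famO F m)) :
    Function.Injective (onMap F m) :=
  rangeFactorization_injective.2 h

theorem onMap_surjective (m : ℕ) : Function.Surjective (onMap F m) :=
  rangeFactorization_surjective

theorem famO_zero_injective (t₀ : TopologicalSpace (Opens Y)) (ht₀ : @T0Space (Opens Y) t₀)
    (hF : F 0 = {s : Set (Opens Y) | IsOpen[t₀] s}) : Function.Injective (famO F 0) := by
  change Function.Injective (membersAt (F 0))
  rw [hF]
  exact t0Space_iff_injective_membersAt.1 ht₀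

theorem famO_succ_injective {k : ℕ} (hk : Function.Injective (famO F k))
    (t : TopologicalSpace (OmegaN F k)) (ht : @T0Space (OmegaN F k) t)
    (hF : F (k + 1) = {A : Set (Stage Y (k + 1)) |
      ∃ H : Set (OmegaN F k), IsOpen[t] H ∧ A = Subtype.val '' H}) :
    Function.Injective (famO F (k + 1)) := by
  have hF' : F (k + 1) = image Subtype.val '' {H : Set (OmegaN F k) | IsOpen[t] H} := by
    simp only [hF, image, mem_ofPred_eq, eq_comm]
  have hsep : Function.Injective fun s : OmegaN F k ↦ membersAt (F (k + 1)) s.val := by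
    rw [hF']
    exact membersAt_image_image_injective Subtype.val_injective
      (t0Space_iff_injective_membersAt.1 ht)
  exact hsep.comp (onMap_injective hk)

theorem famO_injective (t₀ : TopologicalSpace (Opens Y)) (ht₀ : @T0Space (Opens Y) t₀)
    (hF₀ : F 0 = {s : Set (Opens Y) | IsOpen[t₀] s})
    (t : ∀ k, TopologicalSpace (OmegaN F k)) (m : ℕ) (ht : ∀ k < m, @T0Space (OmegaN F k) (t k))
    (hF : ∀ k < m, F (k + 1) = {A : Set (Stage Y (k + 1)) |
      ∃ H : Set (OmegaN F k), IsOpen[t k] H ∧ A = Subtype.val '' H}) :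
    Function.Injective (famO F m) := by
  induction m with
  | zero => exact famO_zero_injective t₀ ht₀ hF₀
  | succ k ih =>
    have hk : Function.Injective (famO F k) :=
      ih (fun i hi ↦ ht i (Nat.lt_succ_of_lt hi)) fun i hi ↦ hF i (Nat.lt_succ_of_lt hi)
    exact famO_succ_injective hk (t k) (ht k k.lt_succ_self) (hF k k.lt_succ_self)

end FamO

section Sierpinski

variable {X : Type*} [TopologicalSpace X]

/-- The open set `{1}` of the Sierpiński space. -/
def opensTrue : Opens Prop :=
  ⟨{True}, isOpen_singleton_true⟩

theorem opens_prop_eq_bot_or_eq_opensTrue_or_eq_top (U : Opens Prop) :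
    U = ⊥ ∨ U = opensTrue ∨ U = ⊤ := by
  by_cases hF : False ∈ U
  · have hU : (U : Set Prop) = univ := by
      simpa only [nhds_false, Filter.mem_top] using U.isOpen.mem_nhds hF
    exact .inr (.inr (Opens.ext hU))
  · by_cases hT : True ∈ U
    · refine .inr (.inl (Opens.ext (Set.ext fun p ↦ ?_)))
      by_cases hp : p <;> simp [hp, hT, hF, opensTrue]
    · refine .inl (Opens.ext (Set.ext fun p ↦ ?_))
      by_cases hp : p <;> simp [hp, hT, hF]

/-- The correspondence between continuous maps `f : X → 𝐒` and open sets `f⁻¹({1})` of `X`. -/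
def continuousMapPropEquivOpens : C(X, Prop) ≃ Opens X where
  toFun f := Opens.comap f opensTrue
  invFun U := ⟨(· ∈ U), continuous_Prop.2 U.isOpen⟩
  left_inv f := by ext x; simp [opensTrue]
  right_inv U := by ext x; simp [opensTrue]

end Sierpinski

theorem famTop_prop_eq_induced (F : ∀ k, Set (Set (Stage Y k))) (m : ℕ)
    (τ : TopologicalSpace (OmegaN F m)) :
    famTop Prop F m τ = τ.induced (onMap F m ∘ continuousMapPropEquivOpens) := by
  apply le_antisymm
  · rintro _ ⟨H, hH, rfl⟩
    exact isOpen_generateFrom_of_mem ⟨H, opensTrue, hH, rfl⟩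
  · apply le_generateFrom
    rintro _ ⟨H, U, hH, rfl⟩
    obtain rfl | rfl | rfl := opens_prop_eq_bot_or_eq_opensTrue_or_eq_top U
    · exact @isOpen_const _ (τ.induced _) (onMap F m ⊥ ∈ H)
    · exact ⟨H, hH, rfl⟩
    · exact @isOpen_const _ (τ.induced _) (onMap F m ⊤ ∈ H)

theorem stmt6_general {F : ∀ k, Set (Set (Stage Y k))} {m : ℕ}
    (hinj : Function.Injective (famO F m)) (τ : TopologicalSpace (OmegaN F m)) :
    Nonempty (@Homeomorph C(Y, Prop) (OmegaN F m) (famTop Prop F m τ) τ) := by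
  let : TopologicalSpace C(Y, Prop) := famTop Prop F m τ
  let e : C(Y, Prop) ≃ OmegaN F m :=
    continuousMapPropEquivOpens.trans
      (Equiv.ofBijective (onMap F m) ⟨onMap_injective hinj, onMap_surjective m⟩)
  exact ⟨e.toHomeomorphOfIsInducing ⟨famTop_prop_eq_induced F m τ⟩⟩

/-- Let `τ₀` be a `T₀` topology on `𝒪(Y)` and, for `i = 1, …, n-1`, let `τᵢ` be a `T₀` topology
on `𝒪ⁱ(ℱᵢ)`, the families being chosen so that `ℱ_{i+1} = τᵢ` for `i = 0, …, n-1` (in particular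
`ℱ₁ = τ₀`; a topology is identified with its family of open sets, an open subset of the subtype
`𝒪ⁱ(ℱᵢ)` being identified with the corresponding set via the inclusion). Then for any topology
`τ` on `𝒪ⁿ(ℱₙ)` the spaces `C_{t_{ℱₙ}(τ)}(Y, 𝐒)` and `(𝒪ⁿ(ℱₙ), τ)` are homeomorphic
(here `n = m + 1`, `t k = τ_{k+1}` and `F k = ℱ_{k+1}`). -/
theorem stmt6 (m : ℕ)
    (t0 : TopologicalSpace (Opens Y)) (ht0 : @T0Space (Opens Y) t0)
    (F : ∀ k, Set (Set (Stage Y k)))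
    (t : ∀ k, TopologicalSpace (OmegaN F k))
    (hT0 : ∀ k < m, @T0Space (OmegaN F k) (t k))
    (hF0 : F 0 = {s : Set (Opens Y) | IsOpen[t0] s})
    (hFk : ∀ k < m, F (k + 1) =
      {A : Set (Stage Y (k + 1)) |
        ∃ H : Set (OmegaN F k), IsOpen[t k] H ∧ A = Subtype.val '' H})
    (τ : TopologicalSpace (OmegaN F m)) :
    Nonempty (@Homeomorph C(Y, Prop) (OmegaN F m) (famTop Prop F m τ) τ) :=
  stmt6_general (famO_injective t0 ht0 hF0 t m hT0 hFk) τ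
end

section
/- Let 𝒜 be an arbitrary family of topological spaces and τ_n a topology on 𝒪^n(ℱ_n). The topology t_{ℱ_n}(τ_n) on C(Y,Z) is 𝒜-jointly continuous if and only if for every space X ∈ 𝒜 and every map G : X → C(Y,Z), the continuity with respect to the first variable of the map Ḡ_n : X × 𝒪(Z) → 𝒪^n(ℱ_n) defined by Ḡ_n(x,U) = O^n((G(x))⁻¹(U)) implies the continuity of the map G̃ : X×Y → Z, G̃(x,y) = G(x)(y). -/
open TopologicalSpace Set Topology

universe u v w

variable {Y : Type u} [TopologicalSpace Y]

/-- A topology `t` on `C(Y, Z)` is `𝒜`-jointly continuous if for every topological space `X`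
in the family `𝒜`, continuity of `G : X → C_t(Y, Z)` implies continuity of `G̃ : X × Y → Z`. -/
def IsAJointlyContinuousTop {Y : Type u} {Z : Type v} [TopologicalSpace Y] [TopologicalSpace Z]
    (𝒜 : (X : Type w) → TopologicalSpace X → Prop) (t : TopologicalSpace C(Y, Z)) : Prop :=
  ∀ (X : Type w) [tX : TopologicalSpace X], 𝒜 X tX →
    ∀ (G : X → C(Y, Z)), Continuous[tX, t] G → Continuous fun p : X × Y => G p.1 p.2

theorem generateFrom_preimages_eq_iInf_induced {α β : Type*} {ι : Sort*} (g : ι → α → β)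
    (τ : TopologicalSpace β) :
    generateFrom {S | ∃ (H : Set β) (i : ι), IsOpen[τ] H ∧ S = {a | g i a ∈ H}} =
      ⨅ i, τ.induced (g i) := by
  have subbasis_eq : {S | ∃ (H : Set β) (i : ι), IsOpen[τ] H ∧ S = {a | g i a ∈ H}} =
      ⋃ i, {S | IsOpen[τ.induced (g i)] S} := by
    ext S
    simp only [mem_ofPred_eq, mem_iUnion, isOpen_induced_iff, preimage, eq_comm (a := S)]
    exact exists_comm
  rw [subbasis_eq, generateFrom_iUnion_isOpen]

theorem famTop_eq_iInf_induced (Z : Type v) [TopologicalSpace Z]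
    (F : ∀ k, Set (Set (Stage Y k))) (m : ℕ) (τ : TopologicalSpace (OmegaN F m)) :
    famTop Z F m τ = ⨅ U : Opens Z, τ.induced fun f => onMap F m (Opens.comap f U) :=
  generateFrom_preimages_eq_iInf_induced (fun U f => onMap F m (Opens.comap f U)) τ

theorem stmt15_general {Z : Type v} [TopologicalSpace Z] {ι : Sort*} {B : ι → Type*}
    (g : ∀ i, C(Y, Z) → B i) (τ : ∀ i, TopologicalSpace (B i))
    (𝒜 : (X : Type w) → TopologicalSpace X → Prop) :
    IsAJointlyContinuousTop 𝒜 (⨅ i, (τ i).induced (g i)) ↔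
      ∀ (X : Type w) [tX : TopologicalSpace X], 𝒜 X tX →
        ∀ G : X → C(Y, Z),
          (∀ i, Continuous[tX, τ i] fun x : X => g i (G x)) →
          Continuous fun p : X × Y => G p.1 p.2 := by
  simp only [IsAJointlyContinuousTop, continuous_iInf_rng, continuous_induced_rng,
    Function.comp_def]

/-- The topology `t_{ℱ_n}(τ)` on `C(Y,Z)` is `𝒜`-jointly continuous iff for every `X ∈ 𝒜` and
every `G : X → C(Y,Z)`, continuity with respect to the first variable of
`Ḡ_n : X × 𝒪(Z) → 𝒪^n(ℱ_n)`, `Ḡ_n(x, U) = O^n((G(x))⁻¹(U))`, implies continuity of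
`G̃ : X × Y → Z`, `G̃(x,y) = G(x)(y)` (here `n = m + 1`). -/
theorem stmt15 (Z : Type v) [TopologicalSpace Z] (F : ∀ k, Set (Set (Stage Y k)))
    (hF : ∀ k, ∀ φ ∈ F (k + 1), ∀ x ∈ φ, x ∈ Set.range (famO F k))
    (m : ℕ) (τ : TopologicalSpace (OmegaN F m))
    (𝒜 : (X : Type w) → TopologicalSpace X → Prop) :
    IsAJointlyContinuousTop 𝒜 (famTop Z F m τ) ↔
      ∀ (X : Type w) [tX : TopologicalSpace X], 𝒜 X tX →
        ∀ G : X → C(Y, Z),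
          (∀ U : Opens Z, Continuous[tX, τ] fun x : X => onMap F m (Opens.comap (G x) U)) →
          Continuous fun p : X × Y => G p.1 p.2 := by
  rw [famTop_eq_iInf_induced]
  exact stmt15_general (fun U f => onMap F m (Opens.comap f U)) (fun _ => τ) 𝒜
end
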